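/- arXiv:1212.1424 — 2 statements merged into one kernel-verified Lean document; each statement's English description precedes it below -/
import Mathlib

section
/- Let Q be a connected Euclidean (affine) quiver, V a preprojective indecomposable representation, and X an indecomposable non-exceptional representation (i.e., Ext^1(X,X) ≠ 0). Then Hom(V,X) ≠ 0. -/
open Matrix BigOperators

/-- A finite quiver: `n` vertices, `a` arrows with source and target maps. -/
structure FinQuiver where
  n : ℕ
  a : ℕ
  src : Fin a → Fin n
  tgt : Fin a → Fin n

namespace FinQuiver

/-- A finite quiver is acyclic iff it admits a topological ordering of vertices. -/
def Acyclic (Q : FinQuiver) : Prop :=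
  ∃ h : Fin Q.n → ℕ, ∀ x, h (Q.src x) < h (Q.tgt x)

/-- Connectivity of the underlying graph. -/
def Connected (Q : FinQuiver) : Prop :=
  ∀ S : Finset (Fin Q.n), S.Nonempty → S ≠ Finset.univ →
    ∃ x, (Q.src x ∈ S ∧ Q.tgt x ∉ S) ∨ (Q.tgt x ∈ S ∧ Q.src x ∉ S)

/-- The Euler form ⟨d,e⟩ = Σ_i d_i e_i − Σ_{α : i → j} d_i e_j. -/
def euler (Q : FinQuiver) (d e : Fin Q.n → ℤ) : ℤ :=
  (∑ i, d i * e i) - ∑ x, d (Q.src x) * e (Q.tgt x)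

/-- A (possibly disconnected) Dynkin quiver: acyclic with positive definite Tits form. -/
def IsDynkin (Q : FinQuiver) : Prop :=
  Q.Acyclic ∧ ∀ d : Fin Q.n → ℤ, d ≠ 0 → 0 < Q.euler d d

/-- `δ` is the null root: positive, isotropic, and every isotropic vector is an
integer multiple of `δ`. -/
def IsNullRoot (Q : FinQuiver) (δ : Fin Q.n → ℤ) : Prop :=
  (∀ i, 0 < δ i) ∧ Q.euler δ δ = 0 ∧
    ∀ d : Fin Q.n → ℤ, Q.euler d d = 0 → ∃ m : ℤ, d = m • δ

/-- A Euclidean (affine) quiver: connected, acyclic, positive semidefinite Tits form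
with a null root. -/
def IsEuclidean (Q : FinQuiver) : Prop :=
  Q.Acyclic ∧ Q.Connected ∧ (∀ d, 0 ≤ Q.euler d d) ∧ ∃ δ, Q.IsNullRoot δ

end FinQuiver

/-- A finite-dimensional representation of `Q` over `k`: dimensions at each vertex,
and a matrix for each arrow. -/
structure QRep (k : Type) [Field k] (Q : FinQuiver) where
  d : Fin Q.n → ℕ
  mat : ∀ x : Fin Q.a, Matrix (Fin (d (Q.tgt x))) (Fin (d (Q.src x))) k

namespace QRep

variable {k : Type} [Field k] {Q : FinQuiver}

/-- The dimension vector of a representation, as an integer vector. -/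
def dimVec (M : QRep k Q) : Fin Q.n → ℤ := fun i => (M.d i : ℤ)

/-- The space of morphisms of representations `M → N`. -/
def homSpace (M N : QRep k Q) :
    Submodule k (∀ i, Matrix (Fin (N.d i)) (Fin (M.d i)) k) where
  carrier := {f | ∀ x, f (Q.tgt x) * M.mat x = N.mat x * f (Q.src x)}
  add_mem' := by
    intro f g hf hg x
    simp only [Pi.add_apply, Matrix.add_mul, Matrix.mul_add, hf x, hg x]
  zero_mem' := by intro x; simp
  smul_mem' := by
    intro c f hf x
    simp only [Pi.smul_apply, Matrix.smul_mul, Matrix.mul_smul, hf x]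

/-- The standard map whose kernel is `Hom(M,N)` and cokernel is `Ext¹(M,N)`. -/
def extMap (M N : QRep k Q) :
    (∀ i, Matrix (Fin (N.d i)) (Fin (M.d i)) k) →ₗ[k]
    (∀ x : Fin Q.a, Matrix (Fin (N.d (Q.tgt x))) (Fin (M.d (Q.src x))) k) where
  toFun f := fun x => f (Q.tgt x) * M.mat x - N.mat x * f (Q.src x)
  map_add' := by
    intro f g; funext x
    simp only [Pi.add_apply, Matrix.add_mul, Matrix.mul_add]
    abel
  map_smul' := by
    intro c f; funext x
    simp only [Pi.smul_apply, Matrix.smul_mul, Matrix.mul_smul, RingHom.id_apply,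
      smul_sub]

/-- dim_k Hom(M,N). -/
noncomputable def homDim (M N : QRep k Q) : ℕ :=
  Module.finrank k (homSpace M N)

/-- dim_k Ext¹(M,N), defined as the dimension of the cokernel of `extMap`. -/
noncomputable def extDim (M N : QRep k Q) : ℕ :=
  Module.finrank k
    ((∀ x : Fin Q.a, Matrix (Fin (N.d (Q.tgt x))) (Fin (M.d (Q.src x))) k) ⧸
      LinearMap.range (extMap M N))

/-- Isomorphism of representations. -/
def IsoRep (M N : QRep k Q) : Prop :=
  ∃ f ∈ homSpace M N, ∀ i, Function.Bijective (Matrix.mulVecLin (f i))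

/-- `L` is (the source of a monomorphism into) a subrepresentation of `M`. -/
def IsSubrep (L M : QRep k Q) : Prop :=
  ∃ f ∈ homSpace L M, ∀ i, Function.Injective (Matrix.mulVecLin (f i))

/-- `L` is a direct summand of `M` (split monomorphism with retraction). -/
def IsSummand (L M : QRep k Q) : Prop :=
  ∃ f ∈ homSpace L M, ∃ g ∈ homSpace M L, ∀ i, g i * f i = 1

/-- `M` is indecomposable: nonzero, and its endomorphism ring has no nontrivial
idempotents. -/
def Indec (M : QRep k Q) : Prop :=
  (∃ i, M.d i ≠ 0) ∧
    ∀ f ∈ homSpace M M, (∀ i, f i * f i = f i) → f = 0 ∨ f = 1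

/-- An exceptional representation: indecomposable and rigid. -/
def Exceptional (M : QRep k Q) : Prop :=
  Indec M ∧ extDim M M = 0

/-- `(f, g)` form a short exact sequence `0 → A → B → C → 0` of representations. -/
def IsSES (A B C : QRep k Q)
    (f : ∀ i, Matrix (Fin (B.d i)) (Fin (A.d i)) k)
    (g : ∀ i, Matrix (Fin (C.d i)) (Fin (B.d i)) k) : Prop :=
  f ∈ homSpace A B ∧ g ∈ homSpace B C ∧
    ∀ i, Function.Injective (Matrix.mulVecLin (f i)) ∧
      Function.Surjective (Matrix.mulVecLin (g i)) ∧
      LinearMap.range (Matrix.mulVecLin (f i)) = LinearMap.ker (Matrix.mulVecLin (g i))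

/-- A thick (= abelian and extension-closed, since rep(Q) is hereditary) full
subcategory: closed under isomorphism, direct summands and two-out-of-three for
short exact sequences. -/
def Thick (P : QRep k Q → Prop) : Prop :=
  (∀ M N, IsoRep M N → P M → P N) ∧
  (∀ L M, IsSummand L M → P M → P L) ∧
  (∀ A B C f g, IsSES A B C f g →
    ((P A → P B → P C) ∧ (P A → P C → P B) ∧ (P B → P C → P A)))

/-- `P` is the smallest thick subcategory containing `S`. -/
def GeneratedBy (P : QRep k Q → Prop) (S : Set (QRep k Q)) : Prop :=
  Thick P ∧ (∀ X ∈ S, P X) ∧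
    ∀ P' : QRep k Q → Prop, Thick P' → (∀ X ∈ S, P' X) → ∀ M, P M → P' M

/-- An exceptional sequence. -/
def ExcSeq {r : ℕ} (E : Fin r → QRep k Q) : Prop :=
  (∀ i, Exceptional (E i) ∧ homDim (E i) (E i) = 1) ∧
    ∀ i j : Fin r, i < j → homDim (E i) (E j) = 0 ∧ extDim (E i) (E j) = 0

/-- King's criterion for `⟨d,−⟩`-semi-stability. -/
def SemiStable (d : Fin Q.n → ℤ) (M : QRep k Q) : Prop :=
  Q.euler d M.dimVec = 0 ∧ ∀ L : QRep k Q, IsSubrep L M → Q.euler d L.dimVec ≤ 0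

/-- `M` is regular: every indecomposable summand pairs to zero with the null root. -/
def RegularRep (δ : Fin Q.n → ℤ) (M : QRep k Q) : Prop :=
  ∀ L, IsSummand L M → Indec L → Q.euler δ L.dimVec = 0

/-- `M` is in the right perpendicular category of `V`. -/
def RPerp (V M : QRep k Q) : Prop := homDim V M = 0 ∧ extDim V M = 0

/-- `M` is in the left perpendicular category of `V`. -/
def LPerp (V M : QRep k Q) : Prop := homDim M V = 0 ∧ extDim M V = 0

/-- `P` is a projective representation (Ext¹(P,−) = 0). -/
def IsProjRep (P : QRep k Q) : Prop := ∀ M : QRep k Q, extDim P M = 0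

end QRep

/-- `α` is a Schur root: the dimension vector of an indecomposable representation
with trivial endomorphism ring. -/
def IsSchurRoot (k : Type) [Field k] (Q : FinQuiver) (α : Fin Q.n → ℤ) : Prop :=
  ∃ M : QRep k Q, M.dimVec = α ∧ QRep.Indec M ∧ QRep.homDim M M = 1

/-- `ext(α,β) = 0`: some representations of these dimension vectors have no
extensions. -/
def ExtZero (k : Type) [Field k] (Q : FinQuiver) (α β : Fin Q.n → ℤ) : Prop :=
  ∃ M N : QRep k Q, M.dimVec = α ∧ N.dimVec = β ∧ QRep.extDim M N = 0

/-- Kac's characterization of the canonical decomposition: `c` is the canonical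
decomposition of `d` iff the entries sum to `d`, are Schur roots, and are pairwise
ext-orthogonal. -/
def IsCanonDecomp (k : Type) [Field k] (Q : FinQuiver) (d : Fin Q.n → ℤ)
    (c : List (Fin Q.n → ℤ)) : Prop :=
  c.sum = d ∧ (∀ α ∈ c, IsSchurRoot k Q α) ∧
    ∀ i j : Fin c.length, i ≠ j → ExtZero k Q (c.get i) (c.get j)

/-!
Over a Euclidean quiver `⟨δ, d⟩ + ⟨d, δ⟩ = 0`, because the Tits form `q` is nonnegative and `δ` is
isotropic. So `V`, having `⟨δ, dim V⟩ < 0`, maps nontrivially to every representation of dimension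
vector `m • δ` with `m > 0`, and it suffices to find such a representation inside `X`; equivalently,
a nonzero subrepresentation `L` with `q(L) ≤ 0`.

It is found by descent on the dimension, following Ringel. Let `M` be indecomposable with
`Ext¹(M, M) ≠ 0` and `q(M) > 0`. Then `dim End(M) > dim Ext¹(M, M)`, so some nonzero endomorphism
kills a nonzero self-extension and is not invertible. Let `θ` be a nonzero endomorphism with maximal
kernel; then `θ² = 0`. Choose an indecomposable direct summand `K` of `ker θ` on which `im θ` has a
nonzero projection. This projection gives a morphism `β : M → K`, again with kernel `ker θ`. If
`Ext¹(K, K)` vanished, so would its quotient `Ext¹(im β, K)`, the projection `ker θ → K` would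
extend to `M`, and `K` would be a direct summand of `M`. Hence `Ext¹(K, K) ≠ 0`, and `K ⊊ M`.
-/

universe u v

namespace FinQuiver

section Euler

variable (Q : FinQuiver) (c : ℤ) (d e f : Fin Q.n → ℤ)

lemma euler_add_left : Q.euler (d + e) f = Q.euler d f + Q.euler e f := by
  simp only [euler, Pi.add_apply, add_mul, Finset.sum_add_distrib]
  ring

lemma euler_add_right : Q.euler d (e + f) = Q.euler d e + Q.euler d f := by
  simp only [euler, Pi.add_apply, mul_add, Finset.sum_add_distrib]
  ring

lemma euler_smul_left : Q.euler (c • d) e = c * Q.euler d e := by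
  simp only [euler, Pi.smul_apply, smul_eq_mul, mul_assoc, ← Finset.mul_sum, mul_sub]

lemma euler_smul_right : Q.euler d (c • e) = c * Q.euler d e := by
  simp only [euler, Pi.smul_apply, smul_eq_mul, mul_left_comm _ c, ← Finset.mul_sum, mul_sub]

end Euler

variable {Q : FinQuiver} {δ : Fin Q.n → ℤ}

lemma euler_add_euler_swap_eq_zero (hq : ∀ d, 0 ≤ Q.euler d d) (hδ : Q.euler δ δ = 0)
    (d : Fin Q.n → ℤ) : Q.euler δ d + Q.euler d δ = 0 := by
  set b := Q.euler δ d + Q.euler d δ with hb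
  have expand (m : ℤ) : Q.euler (m • δ + d) (m • δ + d) = m * b + Q.euler d d := by
    simp only [euler_add_left, euler_add_right, euler_smul_left, euler_smul_right, hδ, hb]
    ring
  by_contra hb0
  have hb_sq : 1 ≤ b * b := mul_self_pos.2 hb0
  have hneg := hq ((-(Q.euler d d + 1) * b) • δ + d)
  rw [expand] at hneg
  nlinarith [hq d]

lemma IsNullRoot.exists_pos_eq_smul (hδ : Q.IsNullRoot δ) {d : Fin Q.n → ℤ}
    (hd : Q.euler d d = 0) (hpos : ∃ i, 0 < d i) : ∃ m : ℤ, 0 < m ∧ d = m • δ := by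
  obtain ⟨i, hi⟩ := hpos
  obtain ⟨m, rfl⟩ := hδ.2.2 d hd
  exact ⟨m, pos_of_mul_pos_left hi (hδ.1 i).le, rfl⟩

end FinQuiver

/-- A finite-dimensional representation of `Q` on arbitrary vector spaces. Unlike the matrix
representations `QRep`, these are closed under passing to invariant families of subspaces. -/
structure LinRep (k : Type u) [Field k] (Q : FinQuiver) where
  space : Fin Q.n → Type v
  [addCommGroup : ∀ i, AddCommGroup (space i)]
  [module : ∀ i, Module k (space i)]
  [finiteDimensional : ∀ i, FiniteDimensional k (space i)]
  map : ∀ x, space (Q.src x) →ₗ[k] space (Q.tgt x)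

namespace LinRep

attribute [instance] addCommGroup module finiteDimensional

variable {k : Type u} [Field k] {Q : FinQuiver} {M N K L : LinRep.{u, v} k Q}

/-- Vertexwise linear maps `M → N`, not required to commute with the arrows. -/
abbrev Family (M N : LinRep.{u, v} k Q) : Type _ := ∀ i, M.space i →ₗ[k] N.space i

/-- Arrowwise linear maps from sources in `M` to targets in `N`; modulo the range of `extMap` these
are the extensions of `M` by `N`. -/
abbrev ArrowFamily (M N : LinRep.{u, v} k Q) : Type _ :=
  ∀ x, M.space (Q.src x) →ₗ[k] N.space (Q.tgt x)

/-- A family is a morphism of representations. -/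
def IsHom (f : Family M N) : Prop :=
  ∀ x v, f (Q.tgt x) (M.map x v) = N.map x (f (Q.src x) v)

/-- Vertexwise composition. -/
abbrev comp (g : Family N L) (f : Family M N) : Family M L := fun i => g i ∘ₗ f i

/-- The family of vertexwise kernels. -/
abbrev ker (f : Family M N) (i : Fin Q.n) : Submodule k (M.space i) := LinearMap.ker (f i)

/-- The family of vertexwise ranges. -/
abbrev range (f : Family M N) (i : Fin Q.n) : Submodule k (N.space i) := LinearMap.range (f i)

/-- The standard map with kernel `Hom(M, N)` and cokernel `Ext¹(M, N)`. -/
def extMap (M N : LinRep.{u, v} k Q) : Family M N →ₗ[k] ArrowFamily M N where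
  toFun f x := f (Q.tgt x) ∘ₗ M.map x - N.map x ∘ₗ f (Q.src x)
  map_add' f g := by
    ext x v
    simp only [Pi.add_apply, LinearMap.sub_apply, LinearMap.comp_apply, LinearMap.add_apply,
      map_add]
    abel
  map_smul' c f := by ext x v; simp [smul_sub]

/-- `Ext¹(M, N) = 0`. -/
def ExtVanishes (M N : LinRep.{u, v} k Q) : Prop := Function.Surjective (extMap M N)

/-- `M` is nonzero and has no idempotent endomorphisms besides `0` and `1`. -/
def IsIndecomposable (M : LinRep.{u, v} k Q) : Prop :=
  (∃ i, Nontrivial (M.space i)) ∧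
    ∀ e : Family M M, IsHom e → IsIdempotentElem e → e = 0 ∨ e = 1

/-- The dimension vector, with integer entries so that it can be fed to the Euler form. -/
noncomputable def dimVec (M : LinRep.{u, v} k Q) (i : Fin Q.n) : ℤ := Module.finrank k (M.space i)

/-- The total dimension, on which inductions over subrepresentations run. -/
noncomputable def totalDim (M : LinRep.{u, v} k Q) : ℕ := ∑ i, Module.finrank k (M.space i)

lemma extMap_apply (f : Family M N) (x : Fin Q.a) (v : M.space (Q.src x)) :
    extMap M N f x v = f (Q.tgt x) (M.map x v) - N.map x (f (Q.src x) v) := rfl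

lemma extMap_eq_zero_iff {f : Family M N} : extMap M N f = 0 ↔ IsHom f := by
  simp only [funext_iff, LinearMap.ext_iff, extMap_apply, Pi.zero_apply, LinearMap.zero_apply,
    sub_eq_zero, IsHom]

lemma isHom_one : IsHom (1 : Family M M) := fun _ _ => rfl

lemma IsHom.sub {f g : Family M N} (hf : IsHom f) (hg : IsHom g) : IsHom (f - g) := by
  rw [← extMap_eq_zero_iff] at *
  rw [map_sub, hf, hg, sub_zero]

lemma IsHom.comp {g : Family N L} {f : Family M N} (hg : IsHom g) (hf : IsHom f) :
    IsHom (comp g f) := by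
  intro x v
  simp only [LinearMap.comp_apply, hf x v, hg x]

lemma comp_ne_zero {g : Family N L} (hg : ∀ i, Function.Injective (g i)) {f : Family M N}
    (hf : f ≠ 0) : comp g f ≠ 0 := by
  refine fun h => hf (funext fun i => (LinearMap.cancel_left (hg i)).1 ?_)
  exact (congrFun h i).trans (LinearMap.comp_zero (g i)).symm

lemma totalDim_lt_of_injective {j : Family K M} (hj : ∀ i, Function.Injective (j i))
    (hsurj : ∃ i, ¬ Function.Surjective (j i)) : K.totalDim < M.totalDim := by
  have hle i := LinearMap.finrank_le_finrank_of_injective (hj i)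
  obtain ⟨i, hi⟩ := hsurj
  refine Finset.sum_lt_sum (fun i _ => hle i) ⟨i, Finset.mem_univ i, (hle i).lt_of_ne fun heq => ?_⟩
  exact hi ((LinearMap.injective_iff_surjective_of_finrank_eq_finrank heq).1 (hj i))

section Euler

lemma euler_dimVec (M N : LinRep.{u, v} k Q) :
    Q.euler M.dimVec N.dimVec =
      Module.finrank k (Family M N) - Module.finrank k (ArrowFamily M N) := by
  simp only [FinQuiver.euler, dimVec, Module.finrank_pi_fintype, Module.finrank_linearMap,
    Nat.cast_sum, Nat.cast_mul]

lemma exists_isHom_ne_zero_of_euler_pos (h : 0 < Q.euler M.dimVec N.dimVec) :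
    ∃ f : Family M N, IsHom f ∧ f ≠ 0 := by
  rw [euler_dimVec, sub_pos, Nat.cast_lt] at h
  obtain ⟨f, hf, hf0⟩ := Submodule.exists_mem_ne_zero_of_ne_bot
    (LinearMap.ker_ne_bot_of_finrank_lt (f := extMap M N) h)
  exact ⟨f, extMap_eq_zero_iff.1 hf, hf0⟩

lemma IsHom.mem_range_extMap_of_comp {f : Family M M} (hf : IsHom f) (hker : ker f = ⊥)
    {c : ArrowFamily M M} (hc : (fun x => f (Q.tgt x) ∘ₗ c x) ∈ LinearMap.range (extMap M M)) :
    c ∈ LinearMap.range (extMap M M) := by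
  have hinj i : Function.Injective (f i) := LinearMap.ker_eq_bot.1 (congrFun hker i)
  obtain ⟨g, hg⟩ := hc
  let e i := LinearEquiv.ofInjectiveEndo (f i) (hinj i)
  have he i v : f i ((e i).symm v) = v := (e i).apply_symm_apply v
  refine ⟨fun i => (e i).symm ∘ₗ g i, ?_⟩
  ext x v
  apply hinj
  have hgx : extMap M M g x v = f (Q.tgt x) (c x v) := by rw [hg]; rfl
  simp only [← hgx, extMap_apply, map_sub, hf x, LinearMap.comp_apply, LinearEquiv.coe_coe, he]

/- As `dim End(M) > dim Ext¹(M, M)`, some nonzero endomorphism kills a given nonzero class of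
`Ext¹(M, M)`; an invertible one could not. -/
lemma exists_isHom_ker_ne_bot (hext : ¬ ExtVanishes M M) (hq : 0 < Q.euler M.dimVec M.dimVec) :
    ∃ f : Family M M, IsHom f ∧ f ≠ 0 ∧ ker f ≠ ⊥ := by
  obtain ⟨c, hc⟩ := not_forall.1 hext
  let act : Family M M →ₗ[k] ArrowFamily M M :=
    LinearMap.pi fun x => LinearMap.lcomp k _ (c x) ∘ₗ LinearMap.proj (Q.tgt x)
  let classMap : LinearMap.ker (extMap M M) →ₗ[k]
      ArrowFamily M M ⧸ LinearMap.range (extMap M M) :=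
    Submodule.mkQ _ ∘ₗ act ∘ₗ Submodule.subtype _
  have hlt : Module.finrank k (ArrowFamily M M ⧸ LinearMap.range (extMap M M)) <
      Module.finrank k (LinearMap.ker (extMap M M)) := by
    have h_rank := LinearMap.finrank_range_add_finrank_ker (extMap M M)
    have h_quot := Submodule.finrank_quotient_add_finrank (LinearMap.range (extMap M M))
    rw [euler_dimVec] at hq
    lia
  obtain ⟨⟨f, hf⟩, hfc, hf0⟩ := Submodule.exists_mem_ne_zero_of_ne_bot
    (LinearMap.ker_ne_bot_of_finrank_lt (f := classMap) hlt)
  refine ⟨f, extMap_eq_zero_iff.1 hf, fun h => hf0 (Subtype.ext h), fun hker => hc ?_⟩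
  exact (extMap_eq_zero_iff.1 hf).mem_range_extMap_of_comp hker
    ((Submodule.Quotient.mk_eq_zero _).1 hfc)

end Euler

section Subrepresentations

/-- The subspaces `U i` are carried into each other by the arrows. -/
def IsInvariant (M : LinRep.{u, v} k Q) (U : ∀ i, Submodule k (M.space i)) : Prop :=
  ∀ x, ∀ v ∈ U (Q.src x), M.map x v ∈ U (Q.tgt x)

/-- The subrepresentation on an invariant family of subspaces. -/
abbrev restrict (M : LinRep.{u, v} k Q) (U : ∀ i, Submodule k (M.space i))
    (hU : M.IsInvariant U) : LinRep.{u, v} k Q where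
  space i := U i
  map x := (M.map x).restrict (hU x)

lemma IsHom.isInvariant_ker {f : Family M N} (hf : IsHom f) : M.IsInvariant (ker f) := by
  intro x v hv
  rw [LinearMap.mem_ker] at hv ⊢
  rw [hf x, hv, map_zero]

lemma IsHom.isInvariant_range {f : Family M N} (hf : IsHom f) : N.IsInvariant (range f) := by
  rintro x _ ⟨v, rfl⟩
  exact ⟨_, hf x v⟩

variable {U W : ∀ i, Submodule k (M.space i)} {hU : M.IsInvariant U}

/-- The inclusion of a subrepresentation. -/
abbrev incl (hU : M.IsInvariant U) : Family (M.restrict U hU) M := fun i => (U i).subtype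

/-- A family of maps with values in the `U i`, viewed as a family into the subrepresentation. -/
abbrev codRestrict (hU : M.IsInvariant U) (f : Family N M) (hf : ∀ i v, f i v ∈ U i) :
    Family N (M.restrict U hU) :=
  fun i => (f i).codRestrict (U i) (hf i)

lemma isHom_incl : IsHom (incl hU) := fun _ _ => rfl

lemma IsHom.codRestrict {f : Family N M} (hf : IsHom f) (hfU : ∀ i v, f i v ∈ U i) :
    IsHom (codRestrict hU f hfU) :=
  fun x v => Subtype.ext (hf x v)

lemma IsInvariant.isHom_projection (hU : M.IsInvariant U) (hW : M.IsInvariant W)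
    (h : ∀ i, IsCompl (U i) (W i)) :
    IsHom (fun i => (U i).projection (W i) (h i) : Family M M) := by
  intro x v
  obtain ⟨a, b, ha, hb, rfl⟩ :=
    Submodule.codisjoint_iff_exists_add_eq.1 (h (Q.src x)).codisjoint v
  simp only [map_add, Submodule.projection_apply_of_mem_left,
    Submodule.projection_apply_of_mem_right, ha, hb, hU x a ha, hW x b hb, map_zero]

lemma IsIndecomposable.eq_bot_or_eq_bot_of_isCompl (hM : M.IsIndecomposable)
    (hU : M.IsInvariant U) (hW : M.IsInvariant W) (h : ∀ i, IsCompl (U i) (W i)) :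
    U = ⊥ ∨ W = ⊥ := by
  refine (hM.2 _ (hU.isHom_projection hW h) ?_).imp (fun h0 => ?_) (fun h1 => ?_)
  · exact funext fun i => Submodule.isIdempotentElem_projection (h i)
  · funext i
    rw [← Submodule.range_projection (h i), congrFun h0 i]
    exact LinearMap.range_zero
  · funext i
    rw [← Submodule.ker_projection (h i), congrFun h1 i]
    exact LinearMap.ker_id

end Subrepresentations

section Indecomposable

lemma IsIndecomposable.eq_zero_or_ker_eq_bot (hM : M.IsIndecomposable) {θ : Family M M}
    (hθ : IsHom θ) (hker : ker (θ * θ) ≤ ker θ) : θ = 0 ∨ ker θ = ⊥ := by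
  have hcompl i : IsCompl (range θ i) (ker θ i) := by
    rw [Submodule.isCompl_iff_disjoint _ _ (LinearMap.finrank_range_add_finrank_ker (θ i)).ge,
      Submodule.disjoint_def]
    rintro _ ⟨v, rfl⟩ hv
    exact hker i hv
  refine (hM.eq_bot_or_eq_bot_of_isCompl hθ.isInvariant_range hθ.isInvariant_ker hcompl).imp_left ?_
  exact fun h => funext fun i => LinearMap.range_eq_bot.1 (congrFun h i)

lemma exists_idempotent_comp_ne_zero (hN : ¬ N.IsIndecomposable) {β : Family M N} (hβ : β ≠ 0) :
    ∃ e : Family N N, IsHom e ∧ IsIdempotentElem e ∧ e ≠ 1 ∧ comp e β ≠ 0 := by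
  have hnontrivial : ∃ i, Nontrivial (N.space i) := by
    obtain ⟨i, hi⟩ := Function.ne_iff.1 hβ
    obtain ⟨v, hv⟩ := DFunLike.ne_iff.1 hi
    exact ⟨i, _, _, hv⟩
  obtain ⟨e, he, he_idem, he0, he1⟩ :
      ∃ e : Family N N, IsHom e ∧ IsIdempotentElem e ∧ e ≠ 0 ∧ e ≠ 1 := by
    simpa [IsIndecomposable, hnontrivial] using hN
  by_cases heβ : comp e β = 0
  · refine ⟨1 - e, isHom_one.sub he, he_idem.one_sub, by simpa using he0, fun h => hβ ?_⟩
    have hsplit : comp (1 - e) β = β - comp e β := rfl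
    rw [← h, hsplit, heβ, sub_zero]
  · exact ⟨e, he, he_idem, he1, heβ⟩

lemma IsHom.totalDim_restrict_range_lt {e : Family N N} (he : IsHom e)
    (he_idem : IsIdempotentElem e) (he1 : e ≠ 1) :
    (N.restrict (range e) he.isInvariant_range).totalDim < N.totalDim := by
  refine totalDim_lt_of_injective (j := incl _) (fun i => Subtype.val_injective) ?_
  by_contra! hsurj
  refine he1 (funext fun i => LinearMap.ext fun v => ?_)
  obtain ⟨⟨_, w, rfl⟩, rfl⟩ := hsurj i v
  exact LinearMap.congr_fun (congrFun he_idem i) w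

lemma exists_isIndecomposable_retract {β : Family M N} (hβ : β ≠ 0) :
    ∃ (K : LinRep.{u, v} k Q) (ι : Family K N) (π : Family N K),
      K.IsIndecomposable ∧ IsHom ι ∧ IsHom π ∧ comp π ι = 1 ∧ comp π β ≠ 0 := by
  induction hd : N.totalDim using Nat.strong_induction_on generalizing N with | _ d ih
  by_cases hN : N.IsIndecomposable
  · exact ⟨N, 1, 1, hN, isHom_one, isHom_one, rfl, hβ⟩
  obtain ⟨e, he, he_idem, he1, heβ⟩ := exists_idempotent_comp_ne_zero hN hβ
  let p := codRestrict he.isInvariant_range e fun i v => ⟨v, rfl⟩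
  have hpβ : comp p β ≠ 0 := fun h => heβ (congrArg (comp (incl he.isInvariant_range)) h)
  have hp_incl : comp p (incl he.isInvariant_range) = 1 := by
    ext i ⟨_, w, rfl⟩
    exact LinearMap.congr_fun (congrFun he_idem i) w
  obtain ⟨K, ι, π, hK, hι, hπ, hπι, hπβ⟩ :=
    ih _ (hd ▸ he.totalDim_restrict_range_lt he_idem he1) hpβ rfl
  refine ⟨K, comp (incl he.isInvariant_range) ι, comp π p, hK, isHom_incl.comp hι,
    hπ.comp (he.codRestrict _), ?_, hπβ⟩
  calc comp (comp π p) (comp (incl he.isInvariant_range) ι)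
      = comp π (comp (comp p (incl he.isInvariant_range)) ι) := rfl
    _ = comp π ι := by rw [hp_incl]; rfl
    _ = 1 := hπι

end Indecomposable

section Extension

lemma exists_comp_eq_of_ker_le {U V W : Type*} [AddCommGroup U] [AddCommGroup V] [AddCommGroup W]
    [Module k U] [Module k V] [Module k W] (f : U →ₗ[k] V) (g : U →ₗ[k] W)
    (h : LinearMap.ker f ≤ LinearMap.ker g) : ∃ d : V →ₗ[k] W, d ∘ₗ f = g := by
  obtain ⟨l, hl⟩ := ((LinearMap.ker f).liftQ f le_rfl).exists_leftInverse_of_injective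
    (Submodule.ker_liftQ_eq_bot' _ _ rfl)
  refine ⟨(LinearMap.ker f).liftQ g h ∘ₗ l, LinearMap.ext fun u => ?_⟩
  exact congrArg ((LinearMap.ker f).liftQ g h) (LinearMap.congr_fun hl (Submodule.Quotient.mk u))

/- The obstruction to extending `π` lies in `Ext¹(im β, L)`, a quotient of `Ext¹(K, L)`. -/
lemma ExtVanishes.exists_isHom_comp_incl_eq (hext : ExtVanishes K L) {β : Family M K}
    (hβ : IsHom β) {U : ∀ i, Submodule k (M.space i)} {hU : M.IsInvariant U} (hker : ker β = U)
    {π : Family (M.restrict U hU) L} (hπ : IsHom π) :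
    ∃ r : Family M L, IsHom r ∧ comp r (incl hU) = π := by
  subst hker
  choose s hs using fun i => LinearMap.exists_extend (π i)
  have hs_apply i v (hv : v ∈ ker β i) : s i v = π i ⟨v, hv⟩ :=
    LinearMap.congr_fun (hs i) ⟨v, hv⟩
  have hker_le x : LinearMap.ker (β (Q.src x)) ≤ LinearMap.ker (extMap M L s x) := by
    intro v hv
    rw [LinearMap.mem_ker, extMap_apply, hs_apply _ v hv, hs_apply _ _ (hU x v hv), sub_eq_zero]
    exact hπ x ⟨v, hv⟩
  choose c hc using fun x => exists_comp_eq_of_ker_le _ _ (hker_le x)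
  obtain ⟨g, rfl⟩ := hext c
  refine ⟨s - comp g β, ?_, ?_⟩
  · have hgβ : extMap M L (comp g β) = extMap M L s := by
      ext x v
      rw [← hc x]
      simp only [extMap_apply, LinearMap.comp_apply, hβ x v]
    rw [← extMap_eq_zero_iff, map_sub, hgβ, sub_self]
  · ext i ⟨v, hv⟩
    have hv0 : β i v = 0 := hv
    simp [hv0, hs_apply i v hv]

lemma IsIndecomposable.not_extVanishes_of_retract_ker (hM : M.IsIndecomposable)
    {U : ∀ i, Submodule k (M.space i)} {hU : M.IsInvariant U} {ι : Family K (M.restrict U hU)}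
    {π : Family (M.restrict U hU) K} (hι : IsHom ι) (hπ : IsHom π) (hπι : comp π ι = 1)
    {β : Family M K} (hβ : IsHom β) (hβ0 : β ≠ 0) (hker : ker β = U) : ¬ ExtVanishes K K := by
  intro hext
  obtain ⟨r, hr, rfl⟩ := hext.exists_isHom_comp_incl_eq hβ hker hπ
  let j := comp (incl hU) ι
  have hrj : comp r j = 1 := hπι
  have hβj : comp β j = 0 := by
    ext i v
    have hmem : j i v ∈ ker β i := hker ▸ (ι i v).2
    exact hmem
  have hidem : IsIdempotentElem (comp j r) := by
    change comp j (comp (comp r j) r) = comp j r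
    rw [hrj]
    rfl
  rcases hM.2 _ (isHom_incl.comp hι |>.comp hr) hidem with h0 | h1
  · apply hβ0
    calc β = comp (comp (comp r j) (comp r j)) β := by rw [hrj]; rfl
      _ = comp (comp (comp r (comp j r)) j) β := rfl
      _ = 0 := by rw [h0]; ext i v; simp
  · apply hβ0
    calc β = comp β (comp j r) := by rw [h1]; rfl
      _ = comp (comp β j) r := rfl
      _ = 0 := by rw [hβj]; ext i; simp

end Extension

section Descent

/-- `θ` is a nonzero endomorphism whose kernel is maximal among those of nonzero endomorphisms. -/
def IsKerMaximal (θ : Family M M) : Prop :=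
  MaximalFor (fun φ : Family M M => IsHom φ ∧ φ ≠ 0) ker θ

lemma exists_isKerMaximal_ker_ne_bot (h : ∃ f : Family M M, IsHom f ∧ f ≠ 0 ∧ ker f ≠ ⊥) :
    ∃ θ : Family M M, IsKerMaximal θ ∧ ker θ ≠ ⊥ := by
  obtain ⟨f, hf, hf0, hker⟩ := h
  have : WellFoundedGT (∀ i, Submodule k (M.space i)) :=
    ⟨(Pi.wellFoundedLT (α := fun i => (Submodule k (M.space i))ᵒᵈ)).wf⟩
  obtain ⟨θ, hθ⟩ := exists_maximalFor_of_wellFoundedGT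
    (fun φ : Family M M => IsHom φ ∧ φ ≠ 0) ker ⟨f, hf, hf0⟩
  refine ⟨θ, hθ, fun h => hker (le_bot_iff.1 ?_)⟩
  exact h ▸ hθ.2 ⟨hf, hf0⟩ (h ▸ bot_le)

lemma IsIndecomposable.mul_self_eq_zero (hM : M.IsIndecomposable) {θ : Family M M}
    (hθ : IsKerMaximal θ) (hker : ker θ ≠ ⊥) : θ * θ = 0 := by
  by_contra hsq
  have hker_sq : ker (θ * θ) ≤ ker θ :=
    hθ.2 ⟨hθ.1.1.comp hθ.1.1, hsq⟩ fun i => LinearMap.ker_le_ker_comp _ _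
  exact (hM.eq_zero_or_ker_eq_bot hθ.1.1 hker_sq).elim hθ.1.2 hker

lemma IsKerMaximal.ker_eq_of_ker_le {θ : Family M M} (hθ : IsKerMaximal θ) {β : Family M K}
    (hβ : IsHom β) (hβ0 : β ≠ 0) {j : Family K M} (hj : IsHom j)
    (hj_inj : ∀ i, Function.Injective (j i)) (hle : ker θ ≤ ker β) : ker β = ker θ := by
  have hker_comp : ker (comp j β) = ker β :=
    funext fun i => LinearMap.ker_comp_of_ker_eq_bot _ (LinearMap.ker_eq_bot.2 (hj_inj i))
  refine le_antisymm ?_ hle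
  exact hker_comp ▸ hθ.2 ⟨hj.comp hβ, comp_ne_zero hj_inj hβ0⟩ (hker_comp ▸ hle)

lemma IsIndecomposable.exists_isHom_injective_totalDim_lt (hM : M.IsIndecomposable)
    (hext : ¬ ExtVanishes M M) (hq : 0 < Q.euler M.dimVec M.dimVec) :
    ∃ (K : LinRep.{u, v} k Q) (j : Family K M), K.IsIndecomposable ∧ ¬ ExtVanishes K K ∧
      IsHom j ∧ (∀ i, Function.Injective (j i)) ∧ K.totalDim < M.totalDim := by
  obtain ⟨θ, hθ, hker⟩ := exists_isKerMaximal_ker_ne_bot (exists_isHom_ker_ne_bot hext hq)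
  obtain ⟨hθ_hom, hθ0⟩ := hθ.1
  have hθθ i v : θ i v ∈ ker θ i :=
    LinearMap.congr_fun (congrFun (hM.mul_self_eq_zero hθ hker) i) v
  have hU := hθ_hom.isInvariant_ker
  let θ' := codRestrict hU θ hθθ
  have hθ'0 : θ' ≠ 0 := fun h => hθ0 (congrArg (comp (incl hU)) h)
  obtain ⟨K, ι, π, hK, hι, hπ, hπι, hβ0⟩ := exists_isIndecomposable_retract hθ'0
  let j := comp (incl hU) ι
  have hj_inj i : Function.Injective (j i) :=
    Subtype.val_injective.comp <|
      Function.LeftInverse.injective (LinearMap.congr_fun (congrFun hπι i))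
  have hβ : IsHom (comp π θ') := hπ.comp (hθ_hom.codRestrict hθθ)
  have hker_β : ker (comp π θ') = ker θ :=
    hθ.ker_eq_of_ker_le hβ hβ0 (isHom_incl.comp hι) hj_inj fun i =>
      (LinearMap.ker_codRestrict _ _ _).ge.trans (LinearMap.ker_le_ker_comp _ _)
  refine ⟨K, j, hK, hM.not_extVanishes_of_retract_ker hι hπ hπι hβ hβ0 hker_β,
    isHom_incl.comp hι, hj_inj, totalDim_lt_of_injective hj_inj ?_⟩
  by_contra! hj_surj
  refine hθ0 (funext fun i => LinearMap.ext fun v => ?_)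
  obtain ⟨w, rfl⟩ := hj_surj i v
  exact (ι i w).2

lemma IsIndecomposable.exists_subrep_euler_nonpos (hM : M.IsIndecomposable)
    (hext : ¬ ExtVanishes M M) :
    ∃ (L : LinRep.{u, v} k Q) (j : Family L M), (∃ i, Nontrivial (L.space i)) ∧
      Q.euler L.dimVec L.dimVec ≤ 0 ∧ IsHom j ∧ ∀ i, Function.Injective (j i) := by
  induction hd : M.totalDim using Nat.strong_induction_on generalizing M with | _ d ih
  rcases le_or_gt (Q.euler M.dimVec M.dimVec) 0 with hq | hq
  · exact ⟨M, 1, hM.1, hq, isHom_one, fun i => Function.injective_id⟩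
  obtain ⟨K, j, hK, hK_ext, hj, hj_inj, hlt⟩ := hM.exists_isHom_injective_totalDim_lt hext hq
  obtain ⟨L, j', hL, hqL, hj', hj'_inj⟩ := ih _ (hd ▸ hlt) hK hK_ext rfl
  exact ⟨L, comp j j', hL, hqL, hj.comp hj', fun i => (hj_inj i).comp (hj'_inj i)⟩

end Descent

end LinRep

namespace QRep

open LinRep

variable {k : Type} [Field k] {Q : FinQuiver}

/-- The representation on the coordinate spaces `k ^ d i` given by the matrices of `M`. -/
abbrev toLinRep (M : QRep k Q) : LinRep k Q where
  space i := Fin (M.d i) → k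
  map x := Matrix.toLin' (M.mat x)

variable (M N : QRep k Q)

/-- The dictionary between families of matrices and families of linear maps. -/
noncomputable def familyEquiv :
    (∀ i, Matrix (Fin (N.d i)) (Fin (M.d i)) k) ≃ₗ[k] Family M.toLinRep N.toLinRep :=
  LinearEquiv.piCongrRight fun _ => Matrix.toLin'

variable {M N}

lemma familyEquiv_extMap (f : ∀ i, Matrix (Fin (N.d i)) (Fin (M.d i)) k) (x : Fin Q.a) :
    LinRep.extMap M.toLinRep N.toLinRep (familyEquiv M N f) x = Matrix.toLin' (extMap M N f x) := by
  change (f (Q.tgt x)).toLin' ∘ₗ (M.mat x).toLin' - (N.mat x).toLin' ∘ₗ (f (Q.src x)).toLin' = _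
  rw [← Matrix.toLin'_mul, ← Matrix.toLin'_mul, ← map_sub]
  rfl

lemma isHom_familyEquiv_iff {f : ∀ i, Matrix (Fin (N.d i)) (Fin (M.d i)) k} :
    IsHom (familyEquiv M N f) ↔ f ∈ homSpace M N := by
  rw [← extMap_eq_zero_iff, funext_iff]
  refine forall_congr' fun x => ?_
  rw [familyEquiv_extMap, Pi.zero_apply, LinearEquiv.map_eq_zero_iff]
  exact sub_eq_zero

lemma dimVec_toLinRep (M : QRep k Q) : M.toLinRep.dimVec = M.dimVec :=
  funext fun i => congrArg Nat.cast (Module.finrank_fin_fun k (n := M.d i))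

lemma Indec.isIndecomposable_toLinRep (hM : Indec M) : M.toLinRep.IsIndecomposable := by
  obtain ⟨⟨i, hi⟩, hidem⟩ := hM
  have : Nonempty (Fin (M.d i)) := Fin.pos_iff_nonempty.1 (Nat.pos_of_ne_zero hi)
  refine ⟨⟨i, inferInstanceAs (Nontrivial (Fin (M.d i) → k))⟩, fun e he he_idem => ?_⟩
  obtain ⟨f, rfl⟩ := (familyEquiv M M).surjective e
  refine (hidem f (isHom_familyEquiv_iff.1 he) fun i => ?_).imp (fun h => ?_) fun h => ?_
  · exact Matrix.toLin'.injective ((Matrix.toLin'_mul _ _).trans (congrFun he_idem i))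
  · rw [h, map_zero]
  · rw [h]
    exact funext fun i => Matrix.toLin'_one

lemma not_extVanishes_toLinRep (h : extDim M N ≠ 0) : ¬ ExtVanishes M.toLinRep N.toLinRep := by
  contrapose! h
  have hrange : LinearMap.range (extMap M N) = ⊤ := by
    refine LinearMap.range_eq_top.2 fun c => ?_
    obtain ⟨g, hg⟩ := h fun x => Matrix.toLin' (c x)
    obtain ⟨f, rfl⟩ := (familyEquiv M N).surjective g
    refine ⟨f, funext fun x => Matrix.toLin'.injective ?_⟩
    rw [← familyEquiv_extMap, hg]
  have := Submodule.Quotient.subsingleton_iff.2 hrange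
  exact Module.finrank_zero_of_subsingleton

lemma homDim_ne_zero_of_isHom {f : Family M.toLinRep N.toLinRep} (hf : IsHom f) (hf0 : f ≠ 0) :
    homDim M N ≠ 0 := by
  obtain ⟨g, rfl⟩ := (familyEquiv M N).surjective f
  intro h
  have hbot : homSpace M N = ⊥ := Submodule.finrank_eq_zero.1 h
  have hg0 : g = 0 := (Submodule.eq_bot_iff _).1 hbot g (isHom_familyEquiv_iff.1 hf)
  exact hf0 (by rw [hg0, map_zero])

end QRep

open QRep in
theorem hom_ne_zero_of_preprojective_general {k : Type} [Field k] {Q : FinQuiver}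
    (hQ : ∀ d, 0 ≤ Q.euler d d) {δ : Fin Q.n → ℤ} (hδ : Q.IsNullRoot δ) {V X : QRep k Q}
    (hV : Q.euler δ V.dimVec < 0) (hX : Indec X) (hXne : extDim X X ≠ 0) :
    homDim V X ≠ 0 := by
  obtain ⟨L, j, ⟨i, hi⟩, hLq, hj, hj_inj⟩ :=
    hX.isIndecomposable_toLinRep.exists_subrep_euler_nonpos (not_extVanishes_toLinRep hXne)
  have hLi : 0 < L.dimVec i := Nat.cast_pos.2 Module.finrank_pos
  obtain ⟨m, hm, hLδ⟩ := hδ.exists_pos_eq_smul (le_antisymm hLq (hQ _)) ⟨i, hLi⟩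
  have hswap := FinQuiver.euler_add_euler_swap_eq_zero hQ hδ.2.1 V.dimVec
  have hVL : 0 < Q.euler V.toLinRep.dimVec L.dimVec := by
    rw [dimVec_toLinRep, hLδ, FinQuiver.euler_smul_right]
    exact mul_pos hm (by lia)
  obtain ⟨f, hf, hf0⟩ := LinRep.exists_isHom_ne_zero_of_euler_pos hVL
  exact homDim_ne_zero_of_isHom (hj.comp hf) (LinRep.comp_ne_zero hj_inj hf0)

open QRep in
/-- over a Euclidean quiver, if `V` is a preprojective indecomposable
(⟨δ, dim V⟩ < 0) and `X` an indecomposable non-exceptional representation, then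
Hom(V,X) ≠ 0. -/
theorem hom_ne_zero_of_preprojective (k : Type) [Field k] [IsAlgClosed k]
    (Q : FinQuiver) (hQ : Q.IsEuclidean) (δ : Fin Q.n → ℤ) (hδ : Q.IsNullRoot δ)
    (V X : QRep k Q) (hV : Indec V) (hVpp : Q.euler δ V.dimVec < 0)
    (hX : Indec X) (hXne : extDim X X ≠ 0) :
    homDim V X ≠ 0 := by
  exact hom_ne_zero_of_preprojective_general hQ.2.2.1 hδ hVpp hX hXne
end

section
/- Let Q be a connected Euclidean quiver, V a preinjective indecomposable representation, and X an indecomposable non-exceptional representation. Then Ext^1(V,X) ≠ 0. -/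
open Matrix BigOperators

/-!
A brick `B` with `Ext¹(B, B) ≠ 0` satisfies `dim End B ≤ dim Ext¹(B, B)`, because pushing a nonsplit
self-extension forward embeds the division ring `End B` into `Ext¹(B, B)`. As the Tits form is
positive semidefinite, `dim B` is isotropic, so `dim B = m δ` with `m > 0`. Since `δ` lies in the
radical of the symmetrised form, `⟨dim V, dim B⟩ = -m ⟨δ, dim V⟩ < 0`, whence `Ext¹(V, B) ≠ 0`.
The functor `Ext¹(V, -)` being right exact, it suffices that every indecomposable `X` with
self-extensions has such a `B` as a quotient.

If `X` is not a brick itself, let `I ⊂ X` be of minimal dimension among the nonzero images of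
endomorphisms of `X`. Every nonzero map `X → I` is onto, and as `X` is indecomposable a surjection
`X → I` vanishes on `I`, hence factors through `Y = X / I`. Some indecomposable summand `K` of `Y`
maps nontrivially, and therefore onto, to `I`. If `Ext¹(K, K)` were zero, then so would be
`Ext¹(K, I)`, and `K → Y` would lift to `X`, making `K` a proper direct summand of `X`. So `K` is a
smaller indecomposable quotient of `X` with self-extensions.
-/

section LinearAlgebra

variable {R : Type*} [CommSemiring R] {l m n : Type*} [Fintype m] [Fintype n]

theorem exists_mul_eq_of_range_mulVecLin_le {A : Matrix l m R} {B : Matrix l n R}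
    (h : LinearMap.range B.mulVecLin ≤ LinearMap.range A.mulVecLin) :
    ∃ C : Matrix m n R, A * C = B := by
  classical
  choose c hc using fun j => h (LinearMap.mem_range_self B.mulVecLin (Pi.single j 1))
  refine ⟨Matrix.of fun i j => c j i, Matrix.ext fun i j => ?_⟩
  exact (congrFun (hc j) i).trans (by simp)

theorem exists_mul_eq_of_ker_mulVecLin_le {R : Type*} [CommRing R] {A : Matrix m n R}
    {B : Matrix l n R} (hA : Function.Surjective A.mulVecLin)
    (h : LinearMap.ker A.mulVecLin ≤ LinearMap.ker B.mulVecLin) :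
    ∃ C : Matrix l m R, C * A = B := by
  classical
  obtain ⟨S, hS⟩ := Matrix.mulVec_surjective_iff_exists_right_inverse.1 hA
  refine ⟨B * S, Matrix.ext_of_mulVec_single fun j => ?_⟩
  have hker : S *ᵥ (A *ᵥ Pi.single j 1) - Pi.single j 1 ∈ LinearMap.ker A.mulVecLin := by
    rw [LinearMap.mem_ker, map_sub, Matrix.mulVecLin_apply, Matrix.mulVec_mulVec, hS,
      Matrix.one_mulVec, Matrix.mulVecLin_apply, sub_self]
  have hB := h hker
  rwa [LinearMap.mem_ker, map_sub, sub_eq_zero, Matrix.mulVecLin_apply, Matrix.mulVec_mulVec,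
    Matrix.mulVec_mulVec] at hB

theorem mul_right_cancel_of_mulVecLin_surjective {A : Matrix m n R} {B C : Matrix l m R}
    (hA : Function.Surjective A.mulVecLin) (h : B * A = C * A) : B = C := by
  classical
  obtain ⟨S, hS⟩ := Matrix.mulVec_surjective_iff_exists_right_inverse.1 hA
  rw [← Matrix.mul_one B, ← hS, ← Matrix.mul_assoc, h, Matrix.mul_assoc, hS, Matrix.mul_one]

theorem mul_left_cancel_of_mulVecLin_injective {n : Type*} {A : Matrix l m R} {B C : Matrix m n R}
    (hA : Function.Injective A.mulVecLin) (h : A * B = A * C) : B = C := by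
  have hcol (j) : B.col j = C.col j := hA (funext fun i => congrFun (congrFun h i) j)
  exact Matrix.ext fun i j => congrFun (hcol j) i

variable {k : Type*} [Field k]

theorem exists_mulVecLin_injective_range_eq [Finite l] (W : Submodule k (l → k)) :
    ∃ (c : ℕ) (A : Matrix l (Fin c) k),
      Function.Injective A.mulVecLin ∧ LinearMap.range A.mulVecLin = W := by
  let e := (Module.finBasis k W).equivFun
  refine ⟨_, LinearMap.toMatrix' (W.subtype ∘ₗ e.symm.toLinearMap), ?_, ?_⟩ <;>
    rw [← Matrix.toLin'_apply', Matrix.toLin'_toMatrix']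
  · exact W.injective_subtype.comp e.symm.injective
  · rw [LinearEquiv.range_comp, Submodule.range_subtype]

theorem exists_mulVecLin_surjective_ker_eq (W : Submodule k (n → k)) :
    ∃ (c : ℕ) (A : Matrix (Fin c) n k),
      Function.Surjective A.mulVecLin ∧ LinearMap.ker A.mulVecLin = W := by
  classical
  let e := (Module.finBasis k ((n → k) ⧸ W)).equivFun
  refine ⟨_, LinearMap.toMatrix' (e.toLinearMap ∘ₗ W.mkQ), ?_, ?_⟩ <;>
    rw [← Matrix.toLin'_apply', Matrix.toLin'_toMatrix']
  · exact e.surjective.comp W.mkQ_surjective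
  · rw [LinearEquiv.ker_comp, Submodule.ker_mkQ]

theorem apply_add_apply_eq_zero_of_isotropic {S M : Type*} [CommRing S] [LinearOrder S]
    [IsStrictOrderedRing S] [AddCommGroup M] [Module S M] (B : LinearMap.BilinForm S M)
    (hB : ∀ x, 0 ≤ B x x) {x : M} (hx : B x x = 0) (y : M) : B x y + B y x = 0 := by
  have hsq := (B + B.flip).apply_sq_le_of_symm (fun z => by simpa using hB z)
    ⟨fun a b => by simp [add_comm]⟩ x y
  exact pow_eq_zero_iff two_ne_zero |>.1 <| le_antisymm (by simpa [hx] using hsq) (sq_nonneg _)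

end LinearAlgebra

namespace FinQuiver

variable (Q : FinQuiver)

/-- The Euler form, bundled so that results on positive semidefinite bilinear forms apply. -/
def eulerForm : LinearMap.BilinForm ℤ (Fin Q.n → ℤ) :=
  LinearMap.mk₂ ℤ Q.euler
    (fun _ _ _ => by simp only [euler, Pi.add_apply, add_mul, Finset.sum_add_distrib]; ring)
    (fun _ _ _ => by simp only [euler, Pi.smul_apply, smul_eq_mul, mul_assoc, Finset.mul_sum,
      mul_sub])
    (fun _ _ _ => by simp only [euler, Pi.add_apply, mul_add, Finset.sum_add_distrib]; ring)
    (fun _ _ _ => by simp only [euler, Pi.smul_apply, smul_eq_mul, mul_left_comm, Finset.mul_sum,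
      mul_sub])

end FinQuiver

namespace QRep

open CategoryTheory Limits

variable {k : Type} [Field k] {Q : FinQuiver}

/-- The category of representations of `Q`; the matrices of `f ≫ g` are the products `g i * f i`. -/
instance : Category (QRep k Q) where
  Hom M N := homSpace M N
  id M := ⟨1, fun x => by simp⟩
  comp f g := ⟨fun i => g.1 i * f.1 i, fun x => by
    rw [Matrix.mul_assoc, f.2 x, ← Matrix.mul_assoc, g.2 x, Matrix.mul_assoc]⟩
  id_comp f := Subtype.ext <| funext fun i => Matrix.mul_one (f.1 i)
  comp_id f := Subtype.ext <| funext fun i => Matrix.one_mul (f.1 i)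
  assoc f g h := Subtype.ext <| funext fun i => (Matrix.mul_assoc (h.1 i) (g.1 i) (f.1 i)).symm

instance : Preadditive (QRep k Q) where
  homGroup M N := inferInstanceAs (AddCommGroup (homSpace M N))
  add_comp _ _ _ f f' g := Subtype.ext <| funext fun i => Matrix.mul_add (g.1 i) (f.1 i) (f'.1 i)
  comp_add _ _ _ f g g' := Subtype.ext <| funext fun i => Matrix.add_mul (g.1 i) (g'.1 i) (f.1 i)

@[ext]
theorem hom_ext {M N : QRep k Q} {f g : M ⟶ N} (h : ∀ i, f.1 i = g.1 i) : f = g :=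
  Subtype.ext (funext h)

theorem mul_eq_of_comp_eq {L M N : QRep k Q} {f : L ⟶ M} {g : M ⟶ N} {h : L ⟶ N} (w : f ≫ g = h)
    (i : Fin Q.n) : g.1 i * f.1 i = h.1 i := by
  rw [← w]
  rfl

theorem id_ne_zero_iff {M : QRep k Q} : 𝟙 M ≠ 0 ↔ ∃ i, M.d i ≠ 0 := by
  refine ⟨fun h => ?_, fun ⟨i, hi⟩ h => ?_⟩
  · by_contra! hd
    have hempty (i) : IsEmpty (Fin (M.d i)) := by rw [hd i]; infer_instance
    exact h (hom_ext fun i => Subsingleton.elim _ _)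
  · have : Nonempty (Fin (M.d i)) := ⟨⟨0, Nat.pos_of_ne_zero hi⟩⟩
    exact one_ne_zero (α := Matrix (Fin (M.d i)) (Fin (M.d i)) k)
      (congrFun (congrArg Subtype.val h) i)

theorem indec_iff {M : QRep k Q} :
    Indec M ↔ 𝟙 M ≠ 0 ∧ ∀ e : M ⟶ M, e ≫ e = e → e = 0 ∨ e = 𝟙 M := by
  rw [Indec, id_ne_zero_iff]
  refine and_congr_right fun _ => ⟨fun h e he => ?_, fun h f hf hff => ?_⟩
  · exact (h e.1 e.2 fun i => mul_eq_of_comp_eq he i).imp Subtype.ext Subtype.ext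
  · exact (h ⟨f, hf⟩ (hom_ext hff)).imp (congrArg Subtype.val) (congrArg Subtype.val)

theorem exists_hom_injective_range_eq (N : QRep k Q) (W : ∀ i, Submodule k (Fin (N.d i) → k))
    (hW : ∀ x, (W (Q.src x)).map (N.mat x).mulVecLin ≤ W (Q.tgt x)) :
    ∃ (I : QRep k Q) (j : I ⟶ N), ∀ i,
      Function.Injective (j.1 i).mulVecLin ∧ LinearMap.range (j.1 i).mulVecLin = W i := by
  choose c j hj hjW using fun i => exists_mulVecLin_injective_range_eq (W i)
  have hrange (x) : LinearMap.range (N.mat x * j (Q.src x)).mulVecLin ≤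
      LinearMap.range (j (Q.tgt x)).mulVecLin := by
    rw [Matrix.mulVecLin_mul, LinearMap.range_comp, hjW, hjW]
    exact hW x
  choose C hC using fun x => exists_mul_eq_of_range_mulVecLin_le (hrange x)
  exact ⟨⟨c, C⟩, ⟨j, hC⟩, fun i => ⟨hj i, hjW i⟩⟩

theorem exists_hom_surjective_ker_eq (M : QRep k Q) (W : ∀ i, Submodule k (Fin (M.d i) → k))
    (hW : ∀ x, (W (Q.src x)).map (M.mat x).mulVecLin ≤ W (Q.tgt x)) :
    ∃ (Y : QRep k Q) (π : M ⟶ Y), ∀ i,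
      Function.Surjective (π.1 i).mulVecLin ∧ LinearMap.ker (π.1 i).mulVecLin = W i := by
  choose c π hπ hπW using fun i => exists_mulVecLin_surjective_ker_eq (W i)
  have hker (x) : LinearMap.ker (π (Q.src x)).mulVecLin ≤
      LinearMap.ker (π (Q.tgt x) * M.mat x).mulVecLin := by
    rw [Matrix.mulVecLin_mul, LinearMap.ker_comp, hπW, hπW]
    exact Submodule.map_le_iff_le_comap.1 (hW x)
  choose C hC using fun x => exists_mul_eq_of_ker_mulVecLin_le (hπ (Q.src x)) (hker x)
  exact ⟨⟨c, C⟩, ⟨π, fun x => (hC x).symm⟩, fun i => ⟨hπ i, hπW i⟩⟩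

theorem mulVecLin_comp_mat {M N : QRep k Q} (f : M ⟶ N) (x : Fin Q.a) :
    (f.1 (Q.tgt x)).mulVecLin ∘ₗ (M.mat x).mulVecLin =
      (N.mat x).mulVecLin ∘ₗ (f.1 (Q.src x)).mulVecLin := by
  rw [← Matrix.mulVecLin_mul, ← Matrix.mulVecLin_mul, f.2 x]

theorem map_mat_range_le {M N : QRep k Q} (f : M ⟶ N) (x : Fin Q.a) :
    (LinearMap.range (f.1 (Q.src x)).mulVecLin).map (N.mat x).mulVecLin ≤
      LinearMap.range (f.1 (Q.tgt x)).mulVecLin := by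
  rw [← LinearMap.range_comp, ← mulVecLin_comp_mat]
  exact LinearMap.range_comp_le_range _ _

theorem map_mat_ker_le {M N : QRep k Q} (f : M ⟶ N) (x : Fin Q.a) :
    (LinearMap.ker (f.1 (Q.src x)).mulVecLin).map (M.mat x).mulVecLin ≤
      LinearMap.ker (f.1 (Q.tgt x)).mulVecLin := by
  rw [Submodule.map_le_iff_le_comap, ← LinearMap.ker_comp, mulVecLin_comp_mat]
  exact LinearMap.ker_le_ker_comp _ _

theorem comp_eq_zero_iff {L M N : QRep k Q} (f : L ⟶ M) (g : M ⟶ N) :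
    f ≫ g = 0 ↔ ∀ i, LinearMap.range (f.1 i).mulVecLin ≤ LinearMap.ker (g.1 i).mulVecLin := by
  simp only [LinearMap.range_le_ker_iff, ← Matrix.mulVecLin_mul]
  refine ⟨fun h i => ?_, fun h => hom_ext fun i => ?_⟩
  · rw [mul_eq_of_comp_eq h]
    exact Matrix.mulVecLin_zero
  · exact Matrix.toLin'.injective ((h i).trans (map_zero _).symm)

theorem epi_iff_surjective {M N : QRep k Q} (f : M ⟶ N) :
    Epi f ↔ ∀ i, Function.Surjective (f.1 i).mulVecLin := by
  refine ⟨fun _ i => ?_, fun hf => ⟨fun g h w => hom_ext fun i =>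
    mul_right_cancel_of_mulVecLin_surjective (hf i) (mul_eq_of_comp_eq w i)⟩⟩
  obtain ⟨Y, π, hπ⟩ := exists_hom_surjective_ker_eq N (fun i => LinearMap.range (f.1 i).mulVecLin)
    (map_mat_range_le f)
  have hfπ : f ≫ π = 0 := (comp_eq_zero_iff f π).2 fun i => (hπ i).2.ge
  have hπ0 : π = 0 := zero_of_epi_comp f hfπ
  rw [← LinearMap.range_eq_top, ← (hπ i).2, hπ0]
  exact LinearMap.ker_eq_top.2 Matrix.mulVecLin_zero

theorem mono_iff_injective {M N : QRep k Q} (f : M ⟶ N) :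
    Mono f ↔ ∀ i, Function.Injective (f.1 i).mulVecLin := by
  refine ⟨fun _ i => ?_, fun hf => ⟨fun g h w => hom_ext fun i =>
    mul_left_cancel_of_mulVecLin_injective (hf i) (mul_eq_of_comp_eq w i)⟩⟩
  obtain ⟨I, j, hj⟩ := exists_hom_injective_range_eq M (fun i => LinearMap.ker (f.1 i).mulVecLin)
    (map_mat_ker_le f)
  have hjf : j ≫ f = 0 := (comp_eq_zero_iff j f).2 fun i => (hj i).2.le
  have hj0 : j = 0 := zero_of_comp_mono f hjf
  rw [← LinearMap.ker_eq_bot, ← (hj i).2, hj0]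
  exact LinearMap.range_eq_bot.2 Matrix.mulVecLin_zero

theorem extDim_eq_zero_iff (M N : QRep k Q) :
    extDim M N = 0 ↔ Function.Surjective (extMap M N) := by
  rw [extDim, Module.finrank_zero_iff, Submodule.Quotient.subsingleton_iff, LinearMap.range_eq_top]

theorem ker_extMap (M N : QRep k Q) : LinearMap.ker (extMap M N) = homSpace M N := by
  ext f
  exact funext_iff.trans (forall_congr' fun x => sub_eq_zero)

theorem homDim_sub_extDim (M N : QRep k Q) :
    (homDim M N : ℤ) - extDim M N = Q.euler M.dimVec N.dimVec := by
  have hrank := LinearMap.finrank_range_add_finrank_ker (extMap M N)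
  have hquot := Submodule.finrank_quotient_add_finrank (LinearMap.range (extMap M N))
  rw [ker_extMap] at hrank
  simp only [Module.finrank_pi_fintype, Module.finrank_matrix, Fintype.card_fin,
    Module.finrank_self, mul_one] at hrank hquot
  zify at hrank hquot
  simp only [homDim, extDim, FinQuiver.euler, dimVec, mul_comm (M.d _ : ℤ)]
  linarith

instance : Balanced (QRep k Q) where
  isIso_of_mono_of_epi {M N} f _ _ := by
    have hinj := (mono_iff_injective f).1 ‹_›
    have hsurj := (epi_iff_surjective f).1 ‹_›
    choose s hs using fun i => Matrix.mulVec_surjective_iff_exists_right_inverse.1 (hsurj i)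
    have hs' (i) : s i * f.1 i = 1 := mul_left_cancel_of_mulVecLin_injective (hinj i) <| by
      rw [← Matrix.mul_assoc, hs, Matrix.one_mul, Matrix.mul_one]
    have hmem : s ∈ homSpace N M := fun x => mul_left_cancel_of_mulVecLin_injective (hinj _) <|
      mul_right_cancel_of_mulVecLin_surjective (hsurj _) <| by
        calc f.1 (Q.tgt x) * (s (Q.tgt x) * N.mat x) * f.1 (Q.src x)
            = N.mat x * f.1 (Q.src x) := by rw [← Matrix.mul_assoc, hs, Matrix.one_mul]
          _ = f.1 (Q.tgt x) * (M.mat x * s (Q.src x)) * f.1 (Q.src x) := by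
            rw [Matrix.mul_assoc, Matrix.mul_assoc (M.mat x), hs', Matrix.mul_one, f.2 x]
    exact ⟨⟨s, hmem⟩, hom_ext hs', hom_ext hs⟩

theorem exists_epi_mono_factorization {M N : QRep k Q} (f : M ⟶ N) :
    ∃ (I : QRep k Q) (p : M ⟶ I) (j : I ⟶ N), Epi p ∧ Mono j ∧ p ≫ j = f := by
  obtain ⟨I, j, hj⟩ := exists_hom_injective_range_eq N (fun i => LinearMap.range (f.1 i).mulVecLin)
    (map_mat_range_le f)
  choose p hp using fun i => exists_mul_eq_of_range_mulVecLin_le (hj i).2.ge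
  have hmem : p ∈ homSpace M I := fun x => mul_left_cancel_of_mulVecLin_injective (hj _).1 <| by
    rw [← Matrix.mul_assoc, hp, f.2 x, ← Matrix.mul_assoc, j.2 x, Matrix.mul_assoc, hp]
  refine ⟨I, ⟨p, hmem⟩, j, (epi_iff_surjective _).2 fun i v => ?_,
    (mono_iff_injective j).2 fun i => (hj i).1, hom_ext hp⟩
  obtain ⟨u, hu⟩ := (hj i).2.le (LinearMap.mem_range_self (j.1 i).mulVecLin v)
  exact ⟨u, (hj i).1 (by rw [← hu, ← hp, Matrix.mulVecLin_mul, LinearMap.comp_apply])⟩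

theorem exists_isSES {I X : QRep k Q} (ι : I ⟶ X) [Mono ι] :
    ∃ (Y : QRep k Q) (π : X ⟶ Y), IsSES I X Y ι.1 π.1 := by
  obtain ⟨Y, π, hπ⟩ := exists_hom_surjective_ker_eq X (fun i => LinearMap.range (ι.1 i).mulVecLin)
    (map_mat_range_le ι)
  exact ⟨Y, π, ι.2, π.2, fun i => ⟨(mono_iff_injective ι).1 ‹_› i, (hπ i).1, (hπ i).2.symm⟩⟩

section ShortExact

variable {I X Y : QRep k Q} {ι : I ⟶ X} {π : X ⟶ Y}

theorem IsSES.epi (h : IsSES I X Y ι.1 π.1) : Epi π :=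
  (epi_iff_surjective π).2 fun i => (h.2.2 i).2.1

theorem IsSES.comp_eq_zero (h : IsSES I X Y ι.1 π.1) : ι ≫ π = 0 :=
  (comp_eq_zero_iff ι π).2 fun i => (h.2.2 i).2.2.le

theorem IsSES.exists_desc (h : IsSES I X Y ι.1 π.1) {Z : QRep k Q} {ρ : X ⟶ Z}
    (hρ : ι ≫ ρ = 0) : ∃ σ : Y ⟶ Z, π ≫ σ = ρ := by
  choose σ hσ using fun i => exists_mul_eq_of_ker_mulVecLin_le (h.2.2 i).2.1
    ((h.2.2 i).2.2.ge.trans ((comp_eq_zero_iff ι ρ).1 hρ i))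
  refine ⟨⟨σ, fun x => mul_right_cancel_of_mulVecLin_surjective (h.2.2 _).2.1 ?_⟩, hom_ext hσ⟩
  rw [Matrix.mul_assoc, ← π.2 x, ← Matrix.mul_assoc, hσ, ρ.2 x, Matrix.mul_assoc, hσ]

theorem IsSES.exists_lift (h : IsSES I X Y ι.1 π.1) {K : QRep k Q} (hK : extDim K I = 0)
    (j : K ⟶ Y) : ∃ l : K ⟶ X, l ≫ π = j := by
  choose s hs using fun i => exists_mul_eq_of_range_mulVecLin_le (A := π.1 i) (B := j.1 i)
    (le_top.trans_eq (LinearMap.range_eq_top.2 (h.2.2 i).2.1).symm)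
  have hker (x) : LinearMap.range (s (Q.tgt x) * K.mat x - X.mat x * s (Q.src x)).mulVecLin ≤
      LinearMap.range (ι.1 (Q.tgt x)).mulVecLin := by
    rw [(h.2.2 _).2.2, LinearMap.range_le_ker_iff, ← Matrix.mulVecLin_mul, Matrix.mul_sub,
      ← Matrix.mul_assoc, hs, ← Matrix.mul_assoc, π.2 x, Matrix.mul_assoc, hs, j.2 x, sub_self,
      Matrix.mulVecLin_zero]
  -- `b` represents the pullback along `j` of the extension class of the sequence.
  choose b hb using fun x => exists_mul_eq_of_range_mulVecLin_le (hker x)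
  obtain ⟨f, hf⟩ := (extDim_eq_zero_iff K I).1 hK b
  refine ⟨⟨fun i => s i - ι.1 i * f i, fun x => ?_⟩, hom_ext fun i => ?_⟩
  · have hx : s (Q.tgt x) * K.mat x - X.mat x * s (Q.src x) =
        ι.1 (Q.tgt x) * f (Q.tgt x) * K.mat x - X.mat x * (ι.1 (Q.src x) * f (Q.src x)) := by
      rw [← hb, ← hf, ← Matrix.mul_assoc (X.mat x), ← ι.2 x, Matrix.mul_assoc, Matrix.mul_assoc,
        ← Matrix.mul_sub]
      rfl
    rw [Matrix.sub_mul, Matrix.mul_sub]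
    exact sub_eq_sub_iff_sub_eq_sub.1 hx
  · change π.1 i * (s i - ι.1 i * f i) = j.1 i
    rw [Matrix.mul_sub, hs, ← Matrix.mul_assoc, mul_eq_of_comp_eq h.comp_eq_zero]
    exact (congrArg _ (Matrix.zero_mul (f i))).trans (sub_zero _)

end ShortExact

theorem comp_mem_range_extMap {V M N : QRep k Q} (f : M ⟶ N)
    {b : ∀ x, Matrix (Fin (M.d (Q.tgt x))) (Fin (V.d (Q.src x))) k}
    (hb : b ∈ LinearMap.range (extMap V M)) :
    (fun x => f.1 (Q.tgt x) * b x) ∈ LinearMap.range (extMap V N) := by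
  obtain ⟨g, rfl⟩ := hb
  refine ⟨fun i => f.1 i * g i, funext fun x => ?_⟩
  change f.1 (Q.tgt x) * g (Q.tgt x) * V.mat x - N.mat x * (f.1 (Q.src x) * g (Q.src x)) =
    f.1 (Q.tgt x) * (g (Q.tgt x) * V.mat x - M.mat x * g (Q.src x))
  rw [Matrix.mul_sub, ← Matrix.mul_assoc (N.mat x), ← f.2 x, Matrix.mul_assoc, Matrix.mul_assoc]

theorem extDim_eq_zero_of_epi {V M N : QRep k Q} (p : M ⟶ N) [Epi p] (h : extDim V M = 0) :
    extDim V N = 0 := by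
  rw [extDim_eq_zero_iff] at h ⊢
  choose s hs using fun i =>
    Matrix.mulVec_surjective_iff_exists_right_inverse.1 ((epi_iff_surjective p).1 ‹_› i)
  intro b
  have hb := comp_mem_range_extMap p (h fun x => s (Q.tgt x) * b x)
  have hsb : (fun x => p.1 (Q.tgt x) * (s (Q.tgt x) * b x)) = b := funext fun x => by
    rw [← Matrix.mul_assoc, hs, Matrix.one_mul]
  rwa [hsb] at hb

section TotalDim

/-- The dimension of `⨁ i, M i`, which measures the length of the inductive arguments below. -/
def totalDim (M : QRep k Q) : ℕ := ∑ i, M.d i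

variable {M N : QRep k Q}

theorem totalDim_lt_of_mono (f : M ⟶ N) [Mono f] (hf : ¬ IsIso f) : M.totalDim < N.totalDim := by
  have hinj := (mono_iff_injective f).1 ‹_›
  have hle (i) : M.d i ≤ N.d i := by
    simpa using LinearMap.finrank_le_finrank_of_injective (hinj i)
  refine (Finset.sum_le_sum fun i _ => hle i).lt_of_ne fun heq => hf ?_
  have hd := (Finset.sum_eq_sum_iff_of_le fun i _ => hle i).1 heq
  have : Epi f := (epi_iff_surjective f).2 fun i =>
    (LinearMap.injective_iff_surjective_of_finrank_eq_finrank
      (by simp [hd i (Finset.mem_univ i)])).1 (hinj i)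
  exact isIso_of_mono_of_epi f

theorem totalDim_lt_of_epi (f : M ⟶ N) [Epi f] (hf : ¬ IsIso f) : N.totalDim < M.totalDim := by
  have hsurj := (epi_iff_surjective f).1 ‹_›
  have hle (i) : N.d i ≤ M.d i := by
    simpa using LinearMap.finrank_le_finrank_of_surjective (hsurj i)
  refine (Finset.sum_le_sum fun i _ => hle i).lt_of_ne fun heq => hf ?_
  have hd := (Finset.sum_eq_sum_iff_of_le fun i _ => hle i).1 heq
  have : Mono f := (mono_iff_injective f).2 fun i =>
    (LinearMap.injective_iff_surjective_of_finrank_eq_finrank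
      (by simp [hd i (Finset.mem_univ i)])).2 (hsurj i)
  exact isIso_of_mono_of_epi f

theorem isIso_of_epi_endomorphism (f : M ⟶ M) [Epi f] : IsIso f :=
  of_not_not fun hf => (totalDim_lt_of_epi f hf).false

end TotalDim

section Retract

instance : IsIdempotentComplete (QRep k Q) where
  idempotents_split X e he := by
    obtain ⟨I, p, j, _, _, rfl⟩ := exists_epi_mono_factorization e
    exact ⟨I, j, p, (cancel_epi p).1 ((cancel_mono j).1 (by simpa using he)), rfl⟩

variable {K X Y : QRep k Q}

theorem totalDim_lt_of_retract (h : Retract K Y) (hne : h.r ≫ h.i ≠ 𝟙 Y) :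
    K.totalDim < Y.totalDim := by
  refine totalDim_lt_of_mono h.i fun _ => hne ?_
  rw [← cancel_epi h.i, h.retract_assoc, Category.comp_id]

theorem Indec.isIso_r_of_retract (hX : Indec X) (h : Retract K X) (hK : 𝟙 K ≠ 0) :
    IsIso h.r := by
  have hidem : (h.r ≫ h.i) ≫ h.r ≫ h.i = h.r ≫ h.i := by simp
  refine ((indec_iff.1 hX).2 _ hidem).elim (fun h0 => (hK ?_).elim) fun h1 =>
    ⟨h.i, h1, h.retract⟩
  calc 𝟙 K = h.i ≫ (h.r ≫ h.i) ≫ h.r := by simp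
    _ = 0 := by rw [h0, zero_comp, comp_zero]

theorem exists_retract_indec_comp_ne_zero {I : QRep k Q} {σ : Y ⟶ I} (hσ : σ ≠ 0) :
    ∃ (K : QRep k Q) (h : Retract K Y), Indec K ∧ h.i ≫ σ ≠ 0 := by
  induction hn : Y.totalDim using Nat.strong_induction_on generalizing Y with | _ n ih
  by_cases hY : Indec Y
  · exact ⟨Y, .refl Y, hY, by simpa using hσ⟩
  have hid : 𝟙 Y ≠ 0 := fun h0 => hσ (by rw [← Category.id_comp σ, h0, zero_comp])
  obtain ⟨e, he, heσ, he1⟩ : ∃ e : Y ⟶ Y, e ≫ e = e ∧ e ≫ σ ≠ 0 ∧ e ≠ 𝟙 Y := by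
    simp only [indec_iff, hid, true_and, not_forall, not_or, ne_eq, not_false_eq_true] at hY
    obtain ⟨e, he, he0, he1⟩ := hY
    by_cases heσ : e ≫ σ = 0
    · exact ⟨𝟙 Y - e, by simp [he], by simpa [heσ] using hσ, by simpa using he0⟩
    · exact ⟨e, he, heσ, he1⟩
  obtain ⟨J, i, r, hir, hri⟩ := IsIdempotentComplete.idempotents_split Y e he
  let h : Retract J Y := ⟨i, r, hir⟩
  have hiσ : i ≫ σ ≠ 0 := fun h0 => heσ (by rw [← hri, Category.assoc, h0, comp_zero])
  have hlt : J.totalDim < Y.totalDim := totalDim_lt_of_retract h (hri.trans_ne he1)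
  obtain ⟨K, hK, hKind, hKσ⟩ := ih _ (hlt.trans_eq hn) hiσ rfl
  exact ⟨K, hK.trans h, hKind, by simpa [h] using hKσ⟩

end Retract

section Brick

/-- A brick: a nonzero representation whose endomorphism ring is a division ring. -/
def IsBrick (B : QRep k Q) : Prop := 𝟙 B ≠ 0 ∧ ∀ θ : B ⟶ B, θ ≠ 0 → IsIso θ

theorem exists_minimal_image {X : QRep k Q} {θ : X ⟶ X} (hθ : θ ≠ 0) (hθiso : ¬ IsIso θ) :
    ∃ (I : QRep k Q) (ρ : X ⟶ I) (ι : I ⟶ X), ρ ≠ 0 ∧ Mono ι ∧ ¬ IsIso ι ∧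
      ∀ g : X ⟶ I, g ≠ 0 → Epi g := by
  obtain ⟨J, p, j, _, _, rfl⟩ := exists_epi_mono_factorization θ
  have hp : p ≠ 0 := by rintro rfl; exact hθ zero_comp
  have hj : ¬ IsIso j := fun _ => hθiso <| by
    have : Epi (p ≫ j) := epi_comp p j
    exact isIso_of_epi_endomorphism _
  obtain ⟨I, ⟨⟨ρ, hρ⟩, ι, _⟩, hmin⟩ := exists_minimalFor_of_wellFoundedLT
    (fun I : QRep k Q => (∃ ρ : X ⟶ I, ρ ≠ 0) ∧ ∃ ι : I ⟶ X, Mono ι) totalDim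
    ⟨J, ⟨p, hp⟩, j, ‹_›⟩
  have hle {J : QRep k Q} (p : X ⟶ J) (hp : p ≠ 0) (j : J ⟶ X) [Mono j] :
      I.totalDim ≤ J.totalDim := not_lt.1 fun hlt => hlt.not_ge (hmin ⟨⟨p, hp⟩, j, ‹_›⟩ hlt.le)
  refine ⟨I, ρ, ι, hρ, ‹_›, fun _ => ?_, fun g hg => ?_⟩
  · refine (hle p hp j).not_gt (totalDim_lt_of_mono (j ≫ inv ι) fun _ => hj ?_)
    exact IsIso.of_isIso_comp_right j (inv ι)
  · obtain ⟨L, q, l, _, _, rfl⟩ := exists_epi_mono_factorization g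
    have hq : q ≠ 0 := by rintro rfl; exact hg zero_comp
    have : IsIso l := of_not_not fun hl => (hle q hq (l ≫ ι)).not_gt (totalDim_lt_of_mono l hl)
    exact epi_comp q l

theorem Indec.comp_eq_zero_of_minimal {X I : QRep k Q} (hX : Indec X) {ρ : X ⟶ I}
    {ι : I ⟶ X} (hρ : ρ ≠ 0) (hι : ¬ IsIso ι) (hmin : ∀ g : X ⟶ I, g ≠ 0 → Epi g) : ι ≫ ρ = 0 := by
  by_contra hne
  have : Epi ρ := hmin ρ hρ
  have : Epi (ρ ≫ ι ≫ ρ) := hmin _ fun h0 => hne ((cancel_epi ρ).1 (h0.trans comp_zero.symm))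
  have : Epi (ι ≫ ρ) := epi_of_epi ρ (ι ≫ ρ)
  have : IsIso (ι ≫ ρ) := isIso_of_epi_endomorphism _
  let h : Retract I X := ⟨ι, ρ ≫ inv (ι ≫ ρ), by rw [← Category.assoc, IsIso.hom_inv_id]⟩
  have hI : 𝟙 I ≠ 0 := fun h0 => hρ (by rw [← Category.comp_id ρ, h0, comp_zero])
  have : IsIso h.r := hX.isIso_r_of_retract h hI
  have : IsIso (h.i ≫ h.r) := by rw [h.retract]; infer_instance
  exact hι (IsIso.of_isIso_comp_right h.i h.r)

theorem Indec.exists_epi_indec_of_not_isIso {X : QRep k Q} (hX : Indec X) {θ : X ⟶ X}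
    (hθ : θ ≠ 0) (hθiso : ¬ IsIso θ) :
    ∃ (K : QRep k Q) (q : X ⟶ K), Epi q ∧ Indec K ∧ extDim K K ≠ 0 ∧
      K.totalDim < X.totalDim := by
  obtain ⟨I, ρ, ι, hρ, _, hι, hmin⟩ := exists_minimal_image hθ hθiso
  obtain ⟨Y, π, hπ⟩ := exists_isSES ι
  obtain ⟨σ, rfl⟩ := hπ.exists_desc (hX.comp_eq_zero_of_minimal hρ hι hmin)
  have hσ : σ ≠ 0 := by rintro rfl; exact hρ comp_zero
  obtain ⟨K, h, hK, hhσ⟩ := exists_retract_indec_comp_ne_zero hσ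
  have : Epi π := hπ.epi
  have hq : Epi (π ≫ h.r) := epi_comp π h.r
  have hι0 : ι ≠ 0 := fun h0 => hρ <| by
    rw [← cancel_mono ι, h0, comp_zero, comp_zero]
  have hqiso : ¬ IsIso (π ≫ h.r) := fun _ => hι0 <| by
    rw [← cancel_mono (π ≫ h.r), ← Category.assoc, hπ.comp_eq_zero, zero_comp, zero_comp]
  refine ⟨K, π ≫ h.r, hq, hK, fun hKK => hqiso ?_, totalDim_lt_of_epi _ hqiso⟩
  have : Epi ((π ≫ h.r) ≫ h.i ≫ σ) := hmin _ fun h0 => hhσ <| by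
    rwa [← comp_zero, cancel_epi] at h0
  have : Epi (h.i ≫ σ) := epi_of_epi (π ≫ h.r) (h.i ≫ σ)
  obtain ⟨l, hl⟩ := hπ.exists_lift (extDim_eq_zero_of_epi (h.i ≫ σ) hKK) h.i
  exact hX.isIso_r_of_retract ⟨l, π ≫ h.r, by rw [← Category.assoc, hl, h.retract]⟩
    (indec_iff.1 hK).1

theorem Indec.exists_epi_isBrick {X : QRep k Q} (hX : Indec X) (hXne : extDim X X ≠ 0) :
    ∃ (B : QRep k Q) (p : X ⟶ B), Epi p ∧ IsBrick B ∧ extDim B B ≠ 0 := by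
  induction hn : X.totalDim using Nat.strong_induction_on generalizing X with | _ n ih
  by_cases hbrick : IsBrick X
  · exact ⟨X, 𝟙 X, inferInstance, hbrick, hXne⟩
  simp only [IsBrick, (indec_iff.1 hX).1, true_and, not_forall, ne_eq, not_false_eq_true] at hbrick
  obtain ⟨θ, hθ, hθiso⟩ := hbrick
  obtain ⟨K, q, _, hK, hKK, hlt⟩ := hX.exists_epi_indec_of_not_isIso hθ hθiso
  obtain ⟨B, p, _, hB⟩ := ih _ (hlt.trans_eq hn) hK hKK rfl
  exact ⟨B, q ≫ p, epi_comp q p, hB⟩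

theorem IsBrick.homDim_le_extDim {B : QRep k Q} (hB : IsBrick B) (hBB : extDim B B ≠ 0) :
    homDim B B ≤ extDim B B := by
  obtain ⟨b, hb⟩ : ∃ b, b ∉ LinearMap.range (extMap B B) := by
    simpa only [ne_eq, extDim_eq_zero_iff, ← LinearMap.range_eq_top,
      Submodule.eq_top_iff', not_forall] using hBB
  -- The class of `b` stays nonzero under every `f ≠ 0`, which is invertible as `B` is a brick.
  let pushforward : homSpace B B →ₗ[k]
      ∀ x, Matrix (Fin (B.d (Q.tgt x))) (Fin (B.d (Q.src x))) k :=
    { toFun := fun f x => f.1 (Q.tgt x) * b x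
      map_add' := fun f g => funext fun x => Matrix.add_mul (f.1 _) (g.1 _) (b x)
      map_smul' := fun c f => funext fun x => Matrix.smul_mul c (f.1 _) (b x) }
  refine LinearMap.finrank_le_finrank_of_injective
    (f := (LinearMap.range (extMap B B)).mkQ ∘ₗ pushforward)
    ((injective_iff_map_eq_zero _).2 fun (f : B ⟶ B) hf => ?_)
  by_contra hf0
  have := hB.2 f hf0
  have hmem := comp_mem_range_extMap (inv f) ((Submodule.Quotient.mk_eq_zero _).1 hf)
  have hinv : (fun x => (inv f).1 (Q.tgt x) * (f.1 (Q.tgt x) * b x)) = b := funext fun x => by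
    rw [← Matrix.mul_assoc, mul_eq_of_comp_eq (IsIso.hom_inv_id f)]
    exact Matrix.one_mul (b x)
  exact hb (hinv ▸ hmem)

end Brick

end QRep

section NullRoot

variable {Q : FinQuiver} {δ : Fin Q.n → ℤ}

theorem FinQuiver.IsNullRoot.euler_add_euler (hδ : Q.IsNullRoot δ) (hQ : ∀ d, 0 ≤ Q.euler d d)
    (d : Fin Q.n → ℤ) : Q.euler δ d + Q.euler d δ = 0 :=
  apply_add_apply_eq_zero_of_isotropic Q.eulerForm hQ hδ.2.1 d

theorem FinQuiver.IsNullRoot.exists_dimVec_eq {k : Type} [Field k] (hδ : Q.IsNullRoot δ)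
    {M : QRep k Q} (hM : ∃ i, M.d i ≠ 0) (hMM : Q.euler M.dimVec M.dimVec = 0) :
    ∃ m : ℤ, 0 < m ∧ M.dimVec = m • δ := by
  obtain ⟨m, hm⟩ := hδ.2.2 _ hMM
  obtain ⟨i, hi⟩ := hM
  have hpos : 0 < m * δ i := by
    rw [← smul_eq_mul, ← Pi.smul_apply, ← hm]
    exact Int.natCast_pos.2 (Nat.pos_of_ne_zero hi)
  exact ⟨m, (mul_pos_iff_of_pos_right (hδ.1 i)).1 hpos, hm⟩

end NullRoot

namespace QRep

open CategoryTheory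

variable {k : Type} [Field k] {Q : FinQuiver}

theorem IsBrick.exists_dimVec_eq {δ : Fin Q.n → ℤ} {B : QRep k Q} (hB : IsBrick B)
    (hBB : extDim B B ≠ 0) (hQ : ∀ d, 0 ≤ Q.euler d d) (hδ : Q.IsNullRoot δ) :
    ∃ m : ℤ, 0 < m ∧ B.dimVec = m • δ := by
  refine hδ.exists_dimVec_eq (id_ne_zero_iff.1 hB.1) (le_antisymm ?_ (hQ _))
  rw [← homDim_sub_extDim, sub_nonpos]
  exact_mod_cast hB.homDim_le_extDim hBB

end QRep

open QRep in
theorem ext_ne_zero_of_preinjective_general {k : Type} [Field k] {Q : FinQuiver}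
    (hQ : ∀ d, 0 ≤ Q.euler d d) {δ : Fin Q.n → ℤ} (hδ : Q.IsNullRoot δ) {V X : QRep k Q}
    (hVpi : 0 < Q.euler δ V.dimVec) (hX : Indec X) (hXne : extDim X X ≠ 0) :
    extDim V X ≠ 0 := by
  obtain ⟨B, p, _, hB, hBB⟩ := hX.exists_epi_isBrick hXne
  obtain ⟨m, hm, hmδ⟩ := hB.exists_dimVec_eq hBB hQ hδ
  have heuler : Q.euler V.dimVec B.dimVec < 0 :=
    calc Q.euler V.dimVec B.dimVec
      _ = m * Q.euler V.dimVec δ := by rw [hmδ]; exact (Q.eulerForm V.dimVec).map_smul m δ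
      _ < 0 := mul_neg_of_pos_of_neg hm (by linarith [hδ.euler_add_euler hQ V.dimVec])
  have hVB : extDim V B ≠ 0 := by
    have := homDim_sub_extDim V B
    omega
  exact fun hVX => hVB (extDim_eq_zero_of_epi p hVX)

open QRep in
/-- over a Euclidean quiver, if `V` is a preinjective indecomposable
(⟨δ, dim V⟩ > 0) and `X` an indecomposable non-exceptional representation, then
Ext¹(V,X) ≠ 0. -/
theorem ext_ne_zero_of_preinjective (k : Type) [Field k] [IsAlgClosed k]
    (Q : FinQuiver) (hQ : Q.IsEuclidean) (δ : Fin Q.n → ℤ) (hδ : Q.IsNullRoot δ)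
    (V X : QRep k Q) (hV : Indec V) (hVpi : 0 < Q.euler δ V.dimVec)
    (hX : Indec X) (hXne : extDim X X ≠ 0) :
    extDim V X ≠ 0 :=
  ext_ne_zero_of_preinjective_general hQ.2.2.1 hδ hVpi hX hXne
end
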